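/- In the linear setting, assume (C1): lim_{n→∞} (1 − h_n)·ln n = 0. Then limsup_{n→∞} sup{ m_n([b_{p+q}, b_p])/(b_p − b_{p+q})^{h_n} : p ≥ 0, q ≥ 1 } ≤ 1. -/

import Mathlib

open Set Filter MeasureTheory Topology

noncomputable section

/-- Composition `g_{i₁} ∘ g_{i₂} ∘ ⋯ ∘ g_{i_l}` along a finite word. -/
def wordComp (g : ℕ → ℝ → ℝ) : List ℕ → ℝ → ℝ
  | [] => id
  | k :: w => g k ∘ wordComp g w

/-- The limit set `J_n` of the IFS `S_n = {g_1, …, g_n}`. -/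
def limitSet (g : ℕ → ℝ → ℝ) (n : ℕ) : Set ℝ :=
  ⋂ l : ℕ, ⋃ w ∈ {w : List ℕ | w.length = l + 1 ∧ ∀ i ∈ w, 1 ≤ i ∧ i ≤ n},
    wordComp g w '' Set.Icc (0 : ℝ) 1

/-- The decreasing affine map `g_k(x) = b_{k-1} - (b_{k-1} - b_k)·x`. -/
def gAff (b : ℕ → ℝ) (k : ℕ) (x : ℝ) : ℝ := b (k - 1) - (b (k - 1) - b k) * x

/-- The normalized Hausdorff measure `m_n` on the limit set `J_n`. -/
def normMeas (g : ℕ → ℝ → ℝ) (h : ℕ → ℝ) (n : ℕ) (A : Set ℝ) : ENNReal :=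
  μH[h n] (A ∩ limitSet g n) / μH[h n] (limitSet g n)

/-!
By self-similarity, up to its two endpoints the part of `J_n` in `[b_r, b_p]` is covered by the
copies `g_k(J_n)` with `p < k ≤ min(n, r)`, and `g_k` scales `h_n`-dimensional Hausdorff measure by
at most `a_k ^ h_n`. Since `h_n ≤ 1`, concavity of `x ↦ x ^ h_n` bounds the sum of these at most `n`
factors by `n ^ (1 - h_n) * (b_p - b_r) ^ h_n`. Hence every density is at most
`n ^ (1 - h_n) = exp ((1 - h_n) * log n)`, which tends to `1` by (C1).
-/

section SumRpow

variable {ι : Type*} {s : Finset ι} {f : ι → ℝ} {d : ℝ}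

lemma sum_rpow_le_card_rpow_mul_rpow_sum (hf : ∀ i ∈ s, 0 ≤ f i) (hd₀ : 0 ≤ d) (hd₁ : d ≤ 1) :
    ∑ i ∈ s, f i ^ d ≤ (s.card : ℝ) ^ (1 - d) * (∑ i ∈ s, f i) ^ d := by
  rcases s.eq_empty_or_nonempty with rfl | hs
  · simpa using mul_nonneg (Real.zero_rpow_nonneg _) (Real.zero_rpow_nonneg _)
  have hcard : (0 : ℝ) < s.card := by exact_mod_cast hs.card_pos
  have jensen : ∑ i ∈ s, (s.card : ℝ)⁻¹ • f i ^ d ≤ (∑ i ∈ s, (s.card : ℝ)⁻¹ • f i) ^ d :=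
    (Real.concaveOn_rpow hd₀ hd₁).le_map_sum (fun _ _ ↦ inv_nonneg.2 hcard.le)
      (by simp [hcard.ne']) hf
  simp only [smul_eq_mul, ← Finset.mul_sum] at jensen
  calc ∑ i ∈ s, f i ^ d ≤ s.card * ((s.card : ℝ)⁻¹ * ∑ i ∈ s, f i) ^ d :=
        (inv_mul_le_iff₀ hcard).1 jensen
    _ = (s.card : ℝ) ^ (1 - d) * (∑ i ∈ s, f i) ^ d := by
        rw [Real.mul_rpow (inv_nonneg.2 hcard.le) (Finset.sum_nonneg hf),
          Real.inv_rpow hcard.le, Real.rpow_sub hcard, Real.rpow_one]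
        ring

lemma pos_of_sum_rpow_lt_card (hf₀ : ∀ i ∈ s, 0 < f i) (hf₁ : ∀ i ∈ s, f i ≤ 1)
    (hsum : ∑ i ∈ s, f i ^ d < s.card) : 0 < d := by
  contrapose! hsum
  calc (s.card : ℝ) = ∑ _i ∈ s, (1 : ℝ) := by simp
    _ ≤ ∑ i ∈ s, f i ^ d := Finset.sum_le_sum fun i hi ↦
        Real.one_le_rpow_of_pos_of_le_one_of_nonpos (hf₀ i hi) (hf₁ i hi) hsum

lemma lt_one_of_sum_lt_sum_rpow (hf₀ : ∀ i ∈ s, 0 < f i) (hf₁ : ∀ i ∈ s, f i ≤ 1)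
    (hsum : ∑ i ∈ s, f i < ∑ i ∈ s, f i ^ d) : d < 1 := by
  contrapose! hsum
  refine Finset.sum_le_sum fun i hi ↦ ?_
  simpa only [Real.rpow_one] using Real.rpow_le_rpow_of_exponent_ge (hf₀ i hi) (hf₁ i hi) hsum

end SumRpow

lemma sum_Ioc_pred_sub {G : Type*} [AddCommGroup G] (b : ℕ → G) {p r : ℕ} (hpr : p ≤ r) :
    ∑ k ∈ Finset.Ioc p r, (b (k - 1) - b k) = b p - b r := by
  induction r, hpr using Nat.le_induction with
  | base => simp
  | succ r hpr ih => rw [Finset.sum_Ioc_succ_top hpr, ih, Nat.add_sub_cancel, sub_add_sub_cancel]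

/-- The union of the images of `[0, 1]` under the compositions of length `l` of the maps
`g_1, …, g_n`. These are the approximations whose intersection over `l ≥ 1` is `limitSet g n`. -/
def cylinderUnion (g : ℕ → ℝ → ℝ) (n l : ℕ) : Set ℝ :=
  ⋃ w ∈ {w : List ℕ | w.length = l ∧ ∀ i ∈ w, 1 ≤ i ∧ i ≤ n}, wordComp g w '' Icc (0 : ℝ) 1

section LimitSet

variable {g : ℕ → ℝ → ℝ} {n : ℕ}

lemma cylinderUnion_zero : cylinderUnion g n 0 = Icc 0 1 := by
  ext x
  simp +contextual [cylinderUnion, wordComp, List.length_eq_zero_iff]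

lemma cylinderUnion_succ (l : ℕ) :
    cylinderUnion g n (l + 1) = ⋃ k : Finset.Icc 1 n, g k '' cylinderUnion g n l := by
  ext x
  simp only [cylinderUnion, image_iUnion, mem_iUnion, mem_ofPred_eq, exists_prop, ← image_comp]
  constructor
  · rintro ⟨_ | ⟨k, w⟩, ⟨hlen, hw⟩, hx⟩
    · simp at hlen
    · obtain ⟨hk, hw⟩ := List.forall_mem_cons.1 hw
      exact ⟨⟨k, Finset.mem_Icc.2 hk⟩, w, ⟨Nat.succ_injective hlen, hw⟩, hx⟩
  · rintro ⟨⟨k, hk⟩, w, ⟨rfl, hw⟩, hx⟩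
    exact ⟨k :: w, ⟨rfl, List.forall_mem_cons.2 ⟨Finset.mem_Icc.1 hk, hw⟩⟩, hx⟩

lemma cylinderUnion_antitone (hmaps : ∀ k ∈ Finset.Icc 1 n, MapsTo (g k) (Icc 0 1) (Icc 0 1)) :
    Antitone (cylinderUnion g n) := by
  refine antitone_nat_of_succ_le fun l ↦ ?_
  induction l with
  | zero =>
    rw [cylinderUnion_succ, cylinderUnion_zero]
    exact iUnion_subset fun k ↦ (hmaps k k.2).image_subset
  | succ l ih =>
    calc cylinderUnion g n (l + 1 + 1)
        = ⋃ k : Finset.Icc 1 n, g k '' cylinderUnion g n (l + 1) := cylinderUnion_succ (l + 1)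
      _ ⊆ ⋃ k : Finset.Icc 1 n, g k '' cylinderUnion g n l := iUnion_mono fun k ↦ image_mono ih
      _ = cylinderUnion g n (l + 1) := (cylinderUnion_succ l).symm

lemma cylinderUnion_subset_Icc (hmaps : ∀ k ∈ Finset.Icc 1 n, MapsTo (g k) (Icc 0 1) (Icc 0 1))
    (l : ℕ) : cylinderUnion g n l ⊆ Icc 0 1 :=
  cylinderUnion_zero (g := g) (n := n) ▸ cylinderUnion_antitone hmaps l.zero_le

lemma limitSet_eq_iInter_cylinderUnion_succ :
    limitSet g n = ⋂ l, cylinderUnion g n (l + 1) :=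
  rfl

lemma limitSet_subset_Icc (hmaps : ∀ k ∈ Finset.Icc 1 n, MapsTo (g k) (Icc 0 1) (Icc 0 1)) :
    limitSet g n ⊆ Icc 0 1 :=
  (iInter_subset _ 0).trans (cylinderUnion_subset_Icc hmaps 1)

lemma limitSet_eq_iInter_cylinderUnion
    (hmaps : ∀ k ∈ Finset.Icc 1 n, MapsTo (g k) (Icc 0 1) (Icc 0 1)) :
    limitSet g n = ⋂ l, cylinderUnion g n l :=
  (iInter_mono fun l ↦ cylinderUnion_antitone hmaps l.le_succ).antisymm
    (subset_iInter fun l ↦ iInter_subset _ (l + 1))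

lemma limitSet_eq_iUnion_image (hmaps : ∀ k ∈ Finset.Icc 1 n, MapsTo (g k) (Icc 0 1) (Icc 0 1))
    (hinj : ∀ k ∈ Finset.Icc 1 n, InjOn (g k) (Icc 0 1)) :
    limitSet g n = ⋃ k : Finset.Icc 1 n, g k '' limitSet g n := by
  have himage_iInter (k : Finset.Icc 1 n) :
      g k '' ⋂ l, cylinderUnion g n l = ⋂ l, g k '' cylinderUnion g n l :=
    ((hinj k k.2).mono (iUnion_subset (cylinderUnion_subset_Icc hmaps))).image_iInter_eq
  calc limitSet g n = ⋂ l, ⋃ k : Finset.Icc 1 n, g k '' cylinderUnion g n l := by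
        simp only [limitSet_eq_iInter_cylinderUnion_succ, cylinderUnion_succ]
    _ = ⋃ k : Finset.Icc 1 n, ⋂ l, g k '' cylinderUnion g n l :=
        iInter_iUnion_of_antitone fun _ _ _ hl ↦ image_mono (cylinderUnion_antitone hmaps hl)
    _ = ⋃ k : Finset.Icc 1 n, g k '' limitSet g n := by
        simp only [limitSet_eq_iInter_cylinderUnion hmaps, himage_iInter]

end LimitSet

section GAff

variable {b : ℕ → ℝ}

lemma lipschitzWith_gAff (b : ℕ → ℝ) (k : ℕ) : LipschitzWith ‖b (k - 1) - b k‖₊ (gAff b k) :=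
  LipschitzWith.of_dist_le_mul fun x y ↦ by
    simp only [gAff, dist_sub_left, coe_nnnorm, Real.dist_eq, ← mul_sub, abs_mul, Real.norm_eq_abs,
      le_refl]

lemma gAff_injective (hb : StrictAnti b) {k : ℕ} (hk : 1 ≤ k) : Function.Injective (gAff b k) :=
  sub_right_injective.comp
    (mul_right_injective₀ (sub_pos.2 (hb (Nat.sub_one_lt_of_lt hk))).ne')

lemma mapsTo_gAff (hb : Antitone b) (k : ℕ) :
    MapsTo (gAff b k) (Icc 0 1) (Icc (b k) (b (k - 1))) := by
  rintro x ⟨hx₀, hx₁⟩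
  have hgap : 0 ≤ b (k - 1) - b k := sub_nonneg.2 (hb k.pred_le)
  have hgap_mul_le : (b (k - 1) - b k) * x ≤ b (k - 1) - b k := mul_le_of_le_one_right hgap hx₁
  exact ⟨by unfold gAff; linarith, sub_le_self _ (mul_nonneg hgap hx₀)⟩

lemma mapsTo_gAff_unitInterval (hb : Antitone b) (hmem : ∀ k, b k ∈ Icc 0 1) (k : ℕ) :
    MapsTo (gAff b k) (Icc 0 1) (Icc 0 1) :=
  (mapsTo_gAff hb k).mono_right (Icc_subset_Icc (hmem k).1 (hmem (k - 1)).2)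

lemma Icc_inter_limitSet_gAff_subset (hb : StrictAnti b) (hmem : ∀ k, b k ∈ Icc 0 1)
    (n p r : ℕ) :
    Icc (b r) (b p) ∩ limitSet (gAff b) n ⊆
      {b r, b p} ∪ ⋃ k ∈ Finset.Ioc p (min n r), gAff b k '' limitSet (gAff b) n := by
  have hmaps : ∀ k ∈ Finset.Icc 1 n, MapsTo (gAff b k) (Icc 0 1) (Icc 0 1) :=
    fun k _ ↦ mapsTo_gAff_unitInterval hb.antitone hmem k
  rintro x ⟨hx, hxJ⟩
  rw [limitSet_eq_iUnion_image hmaps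
    fun k hk ↦ (gAff_injective hb (Finset.mem_Icc.1 hk).1).injOn] at hxJ
  obtain ⟨⟨k, hk⟩, hxk⟩ := mem_iUnion.1 hxJ
  have hx' : x ∈ Icc (b k) (b (k - 1)) :=
    ((mapsTo_gAff hb.antitone k).mono_left (limitSet_subset_Icc hmaps)).image_subset hxk
  obtain ⟨-, hkn⟩ := Finset.mem_Icc.1 hk
  rcases le_or_gt k p with hkp | hpk
  · exact .inl (.inr (hx.2.antisymm ((hb.antitone hkp).trans hx'.1)))
  rcases le_or_gt k r with hkr | hrk
  · exact .inr (mem_biUnion (Finset.mem_Ioc.2 ⟨hpk, le_min hkn hkr⟩) hxk)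
  · exact .inl (.inl ((hx'.2.trans (hb.antitone (Nat.le_pred_of_lt hrk))).antisymm hx.1))

variable {d : ℝ}

lemma hausdorffMeasure_image_gAff_le (hb : Antitone b) (hd : 0 ≤ d) (k : ℕ) (s : Set ℝ) :
    μH[d] (gAff b k '' s) ≤ ENNReal.ofReal ((b (k - 1) - b k) ^ d) * μH[d] s := by
  have hgap : 0 ≤ b (k - 1) - b k := sub_nonneg.2 (hb k.pred_le)
  rw [← ENNReal.ofReal_rpow_of_nonneg hgap hd, ← Real.enorm_of_nonneg hgap]
  exact (lipschitzWith_gAff b k).hausdorffMeasure_image_le hd s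

lemma hausdorffMeasure_Icc_inter_limitSet_gAff_le (hb : StrictAnti b)
    (hmem : ∀ k, b k ∈ Icc 0 1) (hd : 0 < d) (n p r : ℕ) :
    μH[d] (Icc (b r) (b p) ∩ limitSet (gAff b) n) ≤
      ENNReal.ofReal (∑ k ∈ Finset.Ioc p (min n r), (b (k - 1) - b k) ^ d) *
        μH[d] (limitSet (gAff b) n) := by
  have hgap (k : ℕ) : 0 ≤ b (k - 1) - b k := sub_nonneg.2 (hb.antitone k.pred_le)
  have := Measure.nullSingletonClass_hausdorff ℝ hd
  have hendpoints : μH[d] ({b r, b p} : Set ℝ) = 0 := (toFinite _).measure_zero _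
  calc μH[d] (Icc (b r) (b p) ∩ limitSet (gAff b) n)
      ≤ μH[d] ({b r, b p} : Set ℝ) +
          μH[d] (⋃ k ∈ Finset.Ioc p (min n r), gAff b k '' limitSet (gAff b) n) :=
        (measure_mono (Icc_inter_limitSet_gAff_subset hb hmem n p r)).trans (measure_union_le _ _)
    _ ≤ ∑ k ∈ Finset.Ioc p (min n r), μH[d] (gAff b k '' limitSet (gAff b) n) := by
        rw [hendpoints, zero_add]
        exact measure_biUnion_finset_le _ _
    _ ≤ ∑ k ∈ Finset.Ioc p (min n r),
          ENNReal.ofReal ((b (k - 1) - b k) ^ d) * μH[d] (limitSet (gAff b) n) :=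
        Finset.sum_le_sum fun k _ ↦ hausdorffMeasure_image_gAff_le hb.antitone hd.le k _
    _ = _ := by
        rw [ENNReal.ofReal_sum_of_nonneg fun k _ ↦ Real.rpow_nonneg (hgap k) d, Finset.sum_mul]

lemma sum_gap_rpow_le (hb : Antitone b) (hd₀ : 0 ≤ d) (hd₁ : d ≤ 1) (n : ℕ) {p r : ℕ}
    (hpr : p ≤ r) :
    ∑ k ∈ Finset.Ioc p (min n r), (b (k - 1) - b k) ^ d ≤ (n : ℝ) ^ (1 - d) * (b p - b r) ^ d := by
  have hgap (k : ℕ) : 0 ≤ b (k - 1) - b k := sub_nonneg.2 (hb k.pred_le)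
  have hcard : (Finset.Ioc p (min n r)).card ≤ n := by
    rw [Nat.card_Ioc]
    omega
  have hsum : ∑ k ∈ Finset.Ioc p (min n r), (b (k - 1) - b k) ≤ b p - b r := by
    rw [← sum_Ioc_pred_sub b hpr]
    exact Finset.sum_le_sum_of_subset_of_nonneg
      (Finset.Ioc_subset_Ioc_right (min_le_right n r)) fun k _ _ ↦ hgap k
  have hsum_nonneg : 0 ≤ ∑ k ∈ Finset.Ioc p (min n r), (b (k - 1) - b k) :=
    Finset.sum_nonneg fun k _ ↦ hgap k
  refine (sum_rpow_le_card_rpow_mul_rpow_sum (fun k _ ↦ hgap k) hd₀ hd₁).trans ?_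
  gcongr

lemma normMeas_Icc_div_le (hb : StrictAnti b) (hmem : ∀ k, b k ∈ Icc 0 1) {h : ℕ → ℝ} {n : ℕ}
    (hh₀ : 0 < h n) (hh₁ : h n ≤ 1) {p r : ℕ} (hpr : p ≤ r) :
    normMeas (gAff b) h n (Icc (b r) (b p)) / ENNReal.ofReal ((b p - b r) ^ h n) ≤
      ENNReal.ofReal ((n : ℝ) ^ (1 - h n)) := by
  refine ENNReal.div_le_of_le_mul (ENNReal.div_le_of_le_mul ?_)
  rw [← ENNReal.ofReal_mul (Real.rpow_nonneg n.cast_nonneg _)]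
  refine (hausdorffMeasure_Icc_inter_limitSet_gAff_le hb hmem hh₀ n p r).trans ?_
  gcongr
  exact sum_gap_rpow_le hb.antitone hh₀.le hh₁ n hpr

lemma moranExponent_mem_Ioo (hb : StrictAnti b) (hb₀ : b 0 = 1) (hpos : ∀ k, 0 < b k) {n : ℕ}
    (hn : 2 ≤ n) (hmoran : ∑ k ∈ Finset.Icc 1 n, (b (k - 1) - b k) ^ d = 1) : d ∈ Ioo 0 1 := by
  have hgap_pos : ∀ k ∈ Finset.Icc 1 n, 0 < b (k - 1) - b k := fun k hk ↦
    sub_pos.2 (hb (Nat.sub_one_lt_of_lt (Finset.mem_Icc.1 hk).1))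
  have hgap_le_one : ∀ k ∈ Finset.Icc 1 n, b (k - 1) - b k ≤ 1 := fun k _ ↦
    (sub_le_self _ (hpos k).le).trans (hb₀ ▸ hb.antitone (k - 1).zero_le)
  have hsum : ∑ k ∈ Finset.Icc 1 n, (b (k - 1) - b k) = 1 - b n :=
    hb₀ ▸ sum_Ioc_pred_sub b n.zero_le
  constructor
  · refine pos_of_sum_rpow_lt_card hgap_pos hgap_le_one ?_
    rw [hmoran, Nat.card_Icc, Nat.add_sub_cancel]
    exact_mod_cast hn
  · refine lt_one_of_sum_lt_sum_rpow hgap_pos hgap_le_one ?_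
    rw [hmoran, hsum]
    exact sub_lt_self _ (hpos n)

end GAff

lemma tendsto_ofReal_natCast_rpow {u : ℕ → ℝ}
    (hu : Tendsto (fun n : ℕ ↦ u n * Real.log n) atTop (𝓝 0)) :
    Tendsto (fun n : ℕ ↦ ENNReal.ofReal ((n : ℝ) ^ u n)) atTop (𝓝 1) := by
  have hexp : Tendsto (fun n : ℕ ↦ ENNReal.ofReal (Real.exp (u n * Real.log n))) atTop (𝓝 1) := by
    simpa using ENNReal.tendsto_ofReal ((Real.continuous_exp.tendsto 0).comp hu)
  refine hexp.congr' ?_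
  filter_upwards [eventually_gt_atTop 0] with n hn
  rw [Real.rpow_def_of_pos (Nat.cast_pos.2 hn), mul_comm]

/-- In the linear setting, under (C1),
    `limsup_{n→∞} sup{ m_n([b_{p+q}, b_p])/(b_p - b_{p+q})^{h_n} : p ≥ 0, q ≥ 1 } ≤ 1`. -/
theorem linear_density_on_b_intervals
    (b : ℕ → ℝ) (h : ℕ → ℝ)
    (hb0 : b 0 = 1) (hbanti : StrictAnti b)
    (hblim : Filter.Tendsto b Filter.atTop (nhds 0))
    (hmoran : ∀ n, 1 ≤ n → ∑ k ∈ Finset.Icc 1 n, (b (k - 1) - b k) ^ h n = 1)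
    (hdimH : ∀ n, 1 ≤ n → dimH (limitSet (gAff b) n) = ENNReal.ofReal (h n))
    (hC1 : Filter.Tendsto (fun n : ℕ => (1 - h n) * Real.log n) Filter.atTop (nhds 0)) :
    Filter.limsup
      (fun n : ℕ => ⨆ (p : ℕ) (q : ℕ) (_ : 1 ≤ q),
        normMeas (gAff b) h n (Set.Icc (b (p + q)) (b p)) /
          ENNReal.ofReal ((b p - b (p + q)) ^ h n))
      Filter.atTop ≤ 1 := by
  have hpos (k : ℕ) : 0 < b k :=
    (hbanti.antitone.le_of_tendsto hblim (k + 1)).trans_lt (hbanti k.lt_succ_self)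
  have hmem (k : ℕ) : b k ∈ Icc 0 1 := ⟨(hpos k).le, hb0 ▸ hbanti.antitone k.zero_le⟩
  refine le_of_le_of_eq (limsup_le_limsup ?_) (tendsto_ofReal_natCast_rpow hC1).limsup_eq
  filter_upwards [eventually_ge_atTop 2] with n hn
  obtain ⟨hh₀, hh₁⟩ := moranExponent_mem_Ioo hbanti hb0 hpos hn (hmoran n (by omega))
  exact iSup_le fun p ↦ iSup₂_le fun q _ ↦
    normMeas_Icc_div_le hbanti hmem hh₀ hh₁.le (Nat.le_add_right p q)
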